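/- Let 1/3 < λ < 1, let b, σ ∈ C_b^∞(ℝ;ℝ) with inf σ > 0, and for g ∈ C^λ₀([0,1];ℝ) and ξ ∈ ℝ let x_·(ξ,g) be the Doss–Sussmann solution. Fix m ∈ ℕ and let τ_k = k·2^{−m} for k = 0,…,2^m. Then for every ξ ∈ ℝ, every g ∈ C^λ₀([0,1];ℝ) and every choice of target values ξ₁,…,ξ_{2^m} ∈ ℝ (in particular, the values of the Crank–Nicolson approximation along the dyadic partition), there exist unique real numbers κ₁,…,κ_{2^m} such that x_{τ_k}(ξ, g + h) = ξ_k for all k = 1,…,2^m, where h : [0,1] → ℝ is the piecewise linear function with h(0) = 0 which is affine on each interval [τ_{k−1},τ_k] with h(τ_k) − h(τ_{k−1}) = κ_k. -/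

import Mathlib

/-- `f` is in `C_b^∞(ℝ;ℝ)`. -/
def CbInf (f : ℝ → ℝ) : Prop :=
  ContDiff ℝ (⊤ : ℕ∞) f ∧ ∀ i : ℕ, ∃ M : ℝ, ∀ x : ℝ, |iteratedDeriv i f x| ≤ M

/-- `f_{σ,b}(x,y) = exp(−∫₀^y σ'(φ(x,η))dη) · b(φ(x,y))`. -/
noncomputable def fsb (b σ : ℝ → ℝ) (φ : ℝ → ℝ → ℝ) (x y : ℝ) : ℝ :=
  Real.exp (-(∫ η in (0:ℝ)..y, deriv σ (φ x η))) * b (φ x y)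

/-- The piecewise linear path on `[0,1]`, vanishing at `0`, affine on each dyadic interval
`[τ_{k-1}, τ_k]` with `τ_k = k·2^{−m}`, whose increment on the `(i+1)`-st interval is `κ i`. -/
noncomputable def pwl (m : ℕ) (κ : Fin (2 ^ m) → ℝ) (t : ℝ) : ℝ :=
  ∑ i : Fin (2 ^ m), κ i * min (max (t * (2:ℝ) ^ m - ((i : ℕ) : ℝ)) 0) 1

/-! The Lamperti transform `Λ(x) = ∫₀^x dη / σ(η)` straightens the flow, `Λ(φ(α, β)) = Λ(α) + β`,
and thereby turns the Doss–Sussmann solution into the solution `z = w + y` of an equation with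
additive noise `y = g + h`, namely `w' = F(w + y)` with `F` bounded and Lipschitz. On one dyadic
interval, starting from a fixed value, the endpoint of `z` is a continuous (Grönwall) and strictly
increasing (comparison) function of the increment `κ_k` that differs from `κ_k` by a bounded amount,
hence a bijection of `ℝ`. As `z` up to time `τ_k` depends on `κ₁, …, κ_k` only, the increments are
determined successively. -/

open Set Filter Topology MeasureTheory
open scoped NNReal

theorem exists_lipschitzWith_div {X : Type*} [PseudoMetricSpace X] {f g : X → ℝ}
    (hf : ∃ K, LipschitzWith K f) (hg : ∃ K, LipschitzWith K g) (hfM : ∃ M, ∀ x, |f x| ≤ M)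
    (hgpos : ∃ c, 0 < c ∧ ∀ x, c ≤ g x) : ∃ K, LipschitzWith K fun x => f x / g x := by
  obtain ⟨Kf, hf⟩ := hf
  obtain ⟨Kg, hg⟩ := hg
  obtain ⟨M, hM⟩ := hfM
  obtain ⟨c, hc, hcg⟩ := hgpos
  refine ⟨(Kf / c + M * Kg / (c * c)).toNNReal, LipschitzWith.of_dist_le' fun x y => ?_⟩
  have hx : 0 < g x := hc.trans_le (hcg x)
  have hy : 0 < g y := hc.trans_le (hcg y)
  have hM0 : 0 ≤ M := (abs_nonneg _).trans (hM x)
  calc dist (f x / g x) (f y / g y)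
      = |(f x - f y) / g x + f y * (g y - g x) / (g x * g y)| := by
        rw [Real.dist_eq]
        congr 1
        field_simp
        ring
    _ ≤ |f x - f y| / g x + |f y| * |g y - g x| / (g x * g y) := by
        refine (abs_add_le _ _).trans_eq ?_
        rw [abs_div, abs_div, abs_mul, abs_of_pos hx, abs_of_pos (mul_pos hx hy)]
    _ ≤ Kf * dist x y / c + M * (Kg * dist x y) / (c * c) := by
        have hfxy : |f x - f y| ≤ Kf * dist x y := hf.dist_le_mul x y
        have hgyx : |g y - g x| ≤ Kg * dist x y := by
          rw [dist_comm]
          exact hg.dist_le_mul y x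
        gcongr
        exacts [hcg x, hM y, hcg x, hcg y]
    _ = (Kf / c + M * Kg / (c * c)) * dist x y := by ring

theorem continuousOn_of_dist_le_mul_rpow {X Y : Type*} [PseudoMetricSpace X] [PseudoMetricSpace Y]
    {f : X → Y} {s : Set X} {C r : ℝ} (hr : 0 < r)
    (hf : ∀ x ∈ s, ∀ y ∈ s, dist (f y) (f x) ≤ C * dist y x ^ r) : ContinuousOn f s := by
  intro x hx
  refine tendsto_iff_dist_tendsto_zero.2 ?_
  have hmodulus : Continuous fun y => C * dist y x ^ r :=
    continuous_const.mul ((continuous_id.dist continuous_const).rpow_const fun _ => Or.inr hr.le)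
  have hlim : Tendsto (fun y => C * dist y x ^ r) (𝓝[s] x) (𝓝 0) := by
    simpa [Real.zero_rpow hr.ne'] using (hmodulus.tendsto x).mono_left nhdsWithin_le_nhds
  refine squeeze_zero' (Eventually.of_forall fun _ => dist_nonneg) ?_ hlim
  filter_upwards [self_mem_nhdsWithin] with y hy using hf x hx y hy

namespace CbInf

variable {f : ℝ → ℝ}

theorem contDiff_one (hf : CbInf f) : ContDiff ℝ 1 f := hf.1.of_le (mod_cast le_top)

theorem exists_bound (hf : CbInf f) : ∃ M, ∀ x, |f x| ≤ M := by
  simpa only [iteratedDeriv_zero] using hf.2 0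

theorem exists_lipschitzWith (hf : CbInf f) : ∃ K, LipschitzWith K f := by
  obtain ⟨K, hK⟩ := hf.2 1
  refine ⟨K.toNNReal, lipschitzWith_of_nnnorm_deriv_le
    (hf.contDiff_one.differentiable one_ne_zero) fun x => NNReal.le_toNNReal_of_coe_le ?_⟩
  simpa only [iteratedDeriv_one, coe_nnnorm, Real.norm_eq_abs] using hK x

end CbInf

section Triangular

variable {ι : Type*} [PartialOrder ι] [WellFoundedLT ι] [DecidableEq ι] {α β : ι → Type*}
  {E : (∀ i, α i) → ∀ i, β i}

theorem injective_of_triangular (hdep : ∀ k, DependsOn (fun κ => E κ k) (Iic k))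
    (hinj : ∀ κ k, Function.Injective fun s => E (Function.update κ k s) k) :
    Function.Injective E := by
  intro κ κ' h
  funext k
  induction k using WellFoundedLT.induction with
  | _ k ih =>
    have hk : E κ' k = E (Function.update κ k (κ' k)) k := by
      refine hdep k fun i hi => ?_
      obtain rfl | hik := eq_or_lt_of_le (mem_Iic.1 hi)
      · rw [Function.update_self]
      · rw [Function.update_of_ne hik.ne, ih i hik]
    refine hinj κ k ?_
    simp only [Function.update_eq_self]
    rw [← hk, h]

theorem surjective_of_triangular [∀ i, Nonempty (α i)]
    (hdep : ∀ k, DependsOn (fun κ => E κ k) (Iic k))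
    (hsurj : ∀ κ k, Function.Surjective fun s => E (Function.update κ k s) k) :
    Function.Surjective E := by
  classical
  intro ζ
  choose s hs using fun κ k => hsurj κ k (ζ k)
  let extend (k : ι) (prev : ∀ i, i < k → α i) (i : ι) : α i :=
    if h : i < k then prev i h else Classical.arbitrary _
  let κ : ∀ k, α k := IsWellFounded.fix (· < ·) fun k prev => s (extend k prev) k
  have hκ (k : ι) : κ k = s (extend k fun i _ => κ i) k := IsWellFounded.fix_eq _ _ k
  refine ⟨κ, funext fun k => ?_⟩
  rw [← hs (extend k fun i _ => κ i) k, ← hκ]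
  refine hdep k fun i hi => ?_
  obtain rfl | hik := eq_or_lt_of_le (mem_Iic.1 hi)
  · rw [Function.update_self]
  · rw [Function.update_of_ne hik.ne]
    simp only [extend, hik, dif_pos]

end Triangular

section ForcedEquation

theorem pos_of_sub_mul_abs_le_deriv_right {d d' : ℝ → ℝ} {a c δ : ℝ} {K : ℝ≥0} (hac : a < c)
    (hδ : 0 < δ) (hd : ContinuousOn d (Icc a c))
    (hd' : ∀ t ∈ Ico a c, HasDerivWithinAt d (d' t) (Ici t) t) (ha : 0 ≤ d a)
    (hbound : ∀ t ∈ Ico a c, δ - K * |d t| ≤ d' t) : 0 < d c := by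
  -- `d` cannot cross the line `ε (t - a)` downwards: on it, `d' ≥ δ - K ε (c - a) > ε`.
  have hca : 0 < c - a := sub_pos.2 hac
  have hden : 0 < 2 + K * (c - a) := by positivity
  obtain ⟨ε, hε, hεδ⟩ : ∃ ε > 0, ε * (2 + K * (c - a)) = δ :=
    ⟨δ / (2 + K * (c - a)), div_pos hδ hden, div_mul_cancel₀ _ hden.ne'⟩
  have hline (t : ℝ) : HasDerivAt (fun t => -(ε * (t - a))) (-ε) t := by
    simpa only [mul_one] using (((hasDerivAt_id' t).sub_const a).const_mul ε).fun_neg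
  have hcross (t : ℝ) (ht : t ∈ Ico a c) (heq : -d t = -(ε * (t - a))) : -d' t < -ε := by
    have hdt : d t = ε * (t - a) := neg_injective heq
    have hslope := hbound t ht
    rw [hdt, abs_of_nonneg (mul_nonneg hε.le (sub_nonneg.2 ht.1))] at hslope
    have hend : K * (ε * (t - a)) ≤ K * (ε * (c - a)) := by
      gcongr
      exact ht.2.le
    linarith
  have habove : -d c ≤ -(ε * (c - a)) :=
    image_le_of_deriv_right_lt_deriv_boundary hd.neg (fun t ht => (hd' t ht).neg)
      (by simpa using ha) hline hcross (right_mem_Icc.2 hac.le)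
  linarith [mul_pos hε hca]

/-- `w` solves the forced equation `w' = F(w + y)` on `[a, c]`. Equivalently `z = w + y` solves
`dz = F(z) dt + dy`, an equation with additive noise that makes sense for merely continuous `y`.
The equation is imposed through right derivatives on `[a, c)`, as in Mathlib's Grönwall
inequality. -/
structure IsForcedSolutionOn {V : Type*} [NormedAddCommGroup V] [NormedSpace ℝ V]
    (F : V → V) (y w : ℝ → V) (a c : ℝ) : Prop where
  continuousOn : ContinuousOn w (Icc a c)
  hasDerivWithinAt : ∀ t ∈ Ico a c, HasDerivWithinAt w (F (w t + y t)) (Ici t) t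

namespace IsForcedSolutionOn

section Normed

variable {V : Type*} [NormedAddCommGroup V] [NormedSpace ℝ V] {F : V → V}
  {y y₁ y₂ w w₁ w₂ : ℝ → V} {a c : ℝ} {K : ℝ≥0}

theorem mono (h : IsForcedSolutionOn F y w a c) {a' c' : ℝ} (ha : a ≤ a') (hc : c' ≤ c) :
    IsForcedSolutionOn F y w a' c' :=
  ⟨h.continuousOn.mono (Icc_subset_Icc ha hc),
    fun t ht => h.hasDerivWithinAt t (Ico_subset_Ico ha hc ht)⟩

theorem dist_le_gronwallBound (hF : LipschitzWith K F) (h₁ : IsForcedSolutionOn F y₁ w₁ a c)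
    (h₂ : IsForcedSolutionOn F y₂ w₂ a c) (ha : w₁ a = w₂ a) {ε : ℝ}
    (hy : ∀ t ∈ Ico a c, dist (y₁ t) (y₂ t) ≤ ε) {t : ℝ} (ht : t ∈ Icc a c) :
    dist (w₁ t) (w₂ t) ≤ gronwallBound 0 K (K * ε) (t - a) := by
  have hdrift (t : ℝ) : LipschitzWith K fun x => F (x + y₂ t) :=
    LipschitzWith.of_dist_le_mul fun x x' => by
      simpa only [dist_add_right] using hF.dist_le_mul (x + y₂ t) (x' + y₂ t)
  have herr (t : ℝ) (ht : t ∈ Ico a c) :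
      dist (F (w₁ t + y₁ t)) (F (w₁ t + y₂ t)) ≤ K * ε := by
    refine (hF.dist_le_mul _ _).trans ?_
    rw [dist_add_left]
    exact mul_le_mul_of_nonneg_left (hy t ht) K.coe_nonneg
  simpa only [add_zero] using
    dist_le_of_approx_trajectories_ODE hdrift h₁.continuousOn h₁.hasDerivWithinAt herr
      h₂.continuousOn h₂.hasDerivWithinAt (fun t _ => (dist_self _).le) (dist_le_zero.2 ha) t ht

theorem eqOn (hF : LipschitzWith K F) (h₁ : IsForcedSolutionOn F y₁ w₁ a c)
    (h₂ : IsForcedSolutionOn F y₂ w₂ a c) (ha : w₁ a = w₂ a) (hy : EqOn y₁ y₂ (Ico a c)) :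
    EqOn w₁ w₂ (Icc a c) := fun t ht => by
  have h := dist_le_gronwallBound hF h₁ h₂ ha (ε := 0) (fun t ht => dist_le_zero.2 (hy ht)) ht
  rw [mul_zero, gronwallBound_ε0_δ0] at h
  exact dist_le_zero.1 h

theorem dist_endpoint_le (h : IsForcedSolutionOn F y w a c) (hac : a ≤ c) {R : ℝ}
    (hR : ∀ x, ‖F x‖ ≤ R) : dist (w c) (w a) ≤ R * (c - a) := by
  rw [dist_eq_norm]
  exact norm_image_sub_le_of_norm_deriv_right_le_segment h.continuousOn h.hasDerivWithinAt
    (fun t _ => hR _) c (right_mem_Icc.2 hac)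

end Normed

section Real

variable {F : ℝ → ℝ} {a c : ℝ} {K : ℝ≥0}

theorem endpoint_lt_endpoint (hF : LipschitzWith K F) {y₁ y₂ w₁ w₂ : ℝ → ℝ}
    (h₁ : IsForcedSolutionOn F y₁ w₁ a c) (h₂ : IsForcedSolutionOn F y₂ w₂ a c) (hac : a < c)
    (ha : w₁ a = w₂ a) {δ : ℝ} (hδ : 0 < δ)
    (hy : ∀ t ∈ Icc a c, y₂ t - y₁ t = δ * (t - a)) : w₁ c + y₁ c < w₂ c + y₂ c := by
  let d (t : ℝ) : ℝ := w₂ t - w₁ t + δ * (t - a)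
  have hd (t : ℝ) (ht : t ∈ Icc a c) : d t = (w₂ t + y₂ t) - (w₁ t + y₁ t) := by
    linear_combination -hy t ht
  have hcont : ContinuousOn d (Icc a c) :=
    (h₂.continuousOn.sub h₁.continuousOn).add (by fun_prop)
  have hderiv (t : ℝ) (ht : t ∈ Ico a c) :
      HasDerivWithinAt d (F (w₂ t + y₂ t) - F (w₁ t + y₁ t) + δ) (Ici t) t := by
    have hline : HasDerivWithinAt (fun t => δ * (t - a)) δ (Ici t) t := by
      simpa only [mul_one] using (((hasDerivAt_id' t).sub_const a).const_mul δ).hasDerivWithinAt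
    exact ((h₂.hasDerivWithinAt t ht).sub (h₁.hasDerivWithinAt t ht)).add hline
  have hbound (t : ℝ) (ht : t ∈ Ico a c) :
      δ - K * |d t| ≤ F (w₂ t + y₂ t) - F (w₁ t + y₁ t) + δ := by
    have hlip := hF.dist_le_mul (w₂ t + y₂ t) (w₁ t + y₁ t)
    rw [Real.dist_eq, Real.dist_eq, ← hd t (Ico_subset_Icc_self ht)] at hlip
    linarith [(abs_le.1 hlip).1]
  have hpos : 0 < d c :=
    pos_of_sub_mul_abs_le_deriv_right hac hδ hcont hderiv (by simp [d, ha]) hbound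
  rw [hd c (right_mem_Icc.2 hac.le)] at hpos
  exact sub_pos.1 hpos

section AffineFamily

variable {y w : ℝ → ℝ → ℝ} (hF : LipschitzWith K F)
    (hw : ∀ s, IsForcedSolutionOn F (y s) (w s) a c) (hac : a < c) (ha : ∀ s s', w s a = w s' a)
    (hy : ∀ s s', ∀ t ∈ Icc a c, y s t - y s' t = (s - s') * ((t - a) / (c - a)))

include hF hw hac ha hy

theorem dist_endpoint_le_of_affine (s s' : ℝ) :
    dist (w s c + y s c) (w s' c + y s' c)
      ≤ gronwallBound 0 K (K * dist s s') (c - a) + dist s s' := by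
  have hydist (t : ℝ) (ht : t ∈ Icc a c) : dist (y s t) (y s' t) ≤ dist s s' := by
    have hca : 0 < c - a := sub_pos.2 hac
    have h0 : 0 ≤ (t - a) / (c - a) := div_nonneg (sub_nonneg.2 ht.1) hca.le
    have h1 : (t - a) / (c - a) ≤ 1 := (div_le_one hca).2 (sub_le_sub_right ht.2 a)
    rw [Real.dist_eq, hy s s' t ht, abs_mul, abs_of_nonneg h0]
    exact mul_le_of_le_one_right (abs_nonneg _) h1
  have hc : c ∈ Icc a c := right_mem_Icc.2 hac.le
  exact (dist_add_add_le _ _ _ _).trans (add_le_add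
    ((hw s).dist_le_gronwallBound hF (hw s') (ha s s')
      (fun t ht => hydist t (Ico_subset_Icc_self ht)) hc) (hydist c hc))

theorem continuous_endpoint :
    Continuous fun s => w s c + y s c := by
  refine continuous_iff_continuousAt.2 fun s₀ => tendsto_iff_dist_tendsto_zero.2 ?_
  have hmodulus : Continuous fun s => gronwallBound 0 K (K * dist s s₀) (c - a) + dist s s₀ :=
    ((gronwallBound_continuous_ε 0 K (c - a)).comp (by fun_prop)).add (by fun_prop)
  refine squeeze_zero (fun _ => dist_nonneg)
    (fun s => dist_endpoint_le_of_affine hF hw hac ha hy s s₀) ?_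
  simpa [gronwallBound_ε0_δ0] using hmodulus.tendsto s₀

theorem strictMono_endpoint :
    StrictMono fun s => w s c + y s c := fun s s' hs =>
  (hw s).endpoint_lt_endpoint hF (hw s') hac (ha s s')
    (div_pos (sub_pos.2 hs) (sub_pos.2 hac)) fun t ht => by rw [hy s' s t ht]; ring

theorem bijective_endpoint {R : ℝ} (hR : ∀ x, |F x| ≤ R) :
    Function.Bijective fun s => w s c + y s c := by
  refine ⟨(strictMono_endpoint hF hw hac ha hy).injective, ?_⟩
  have hbound (s : ℝ) : |w s c - w 0 a| ≤ R * (c - a) := by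
    rw [ha 0 s]
    exact (hw s).dist_endpoint_le hac.le hR
  have hyc (s : ℝ) : y s c = y 0 c + s := by
    have h := hy s 0 c (right_mem_Icc.2 hac.le)
    rw [div_self (sub_pos.2 hac).ne'] at h
    linarith
  refine (continuous_endpoint hF hw hac ha hy).surjective ?_ ?_
  · refine tendsto_atTop_mono (fun s => ?_)
      (tendsto_atTop_add_const_left _ (w 0 a - R * (c - a) + y 0 c) tendsto_id)
    simp only [id]
    linarith [(abs_le.1 (hbound s)).1, hyc s]
  · refine tendsto_atBot_mono (fun s => ?_)
      (tendsto_atBot_add_const_left _ (w 0 a + R * (c - a) + y 0 c) tendsto_id)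
    simp only [id]
    linarith [(abs_le.1 (hbound s)).2, hyc s]

end AffineFamily

end Real

end IsForcedSolutionOn

end ForcedEquation

section PiecewiseLinear

variable {m : ℕ}

theorem continuous_pwl (κ : Fin (2 ^ m) → ℝ) : Continuous (pwl m κ) := by
  unfold pwl
  fun_prop

theorem pwl_zero (κ : Fin (2 ^ m) → ℝ) : pwl m κ 0 = 0 :=
  Finset.sum_eq_zero fun i _ => by simp

theorem dependsOn_pwl {n : ℕ} {t : ℝ} (ht : t ≤ n / 2 ^ m) :
    DependsOn (fun κ => pwl m κ t) {i | (i : ℕ) < n} := by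
  intro κ κ' h
  rw [le_div_iff₀ (by positivity)] at ht
  refine Finset.sum_congr rfl fun i _ => ?_
  rcases lt_or_ge (i : ℕ) n with hi | hi
  · rw [h i hi]
  · have hin : (n : ℝ) ≤ (i : ℕ) := Nat.cast_le.2 hi
    rw [max_eq_right (by linarith), min_eq_left zero_le_one, mul_zero, mul_zero]

theorem pwl_update_sub_pwl_update (κ : Fin (2 ^ m) → ℝ) (n : Fin (2 ^ m)) (s s' : ℝ) {t : ℝ}
    (ht : t ∈ Icc ((n : ℕ) / 2 ^ m : ℝ) (((n : ℕ) + 1) / 2 ^ m)) :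
    pwl m (Function.update κ n s) t - pwl m (Function.update κ n s') t
      = (s - s') * ((t - (n : ℕ) / 2 ^ m) / (((n : ℕ) + 1) / 2 ^ m - (n : ℕ) / 2 ^ m)) := by
  have hN : (0 : ℝ) < 2 ^ m := by positivity
  have hlower := (div_le_iff₀ hN).1 ht.1
  have hupper := (le_div_iff₀ hN).1 ht.2
  unfold pwl
  rw [← Finset.sum_sub_distrib, Finset.sum_eq_single n]
  · rw [Function.update_self, Function.update_self, max_eq_left (by linarith),
      min_eq_left (by linarith)]
    field_simp
    ring
  · intro i _ hi
    rw [Function.update_of_ne hi, Function.update_of_ne hi, sub_self]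
  · exact fun hn => absurd (Finset.mem_univ n) hn

end PiecewiseLinear

section Shooting

variable {F g : ℝ → ℝ} {K : ℝ≥0} {m : ℕ} {W : (Fin (2 ^ m) → ℝ) → ℝ → ℝ}

theorem natCast_div_two_pow_le_one {n : ℕ} (hn : n ≤ 2 ^ m) : (n : ℝ) / 2 ^ m ≤ 1 :=
  div_le_one_of_le₀ (mod_cast hn) (by positivity)

theorem dependsOn_forcedSolution (hF : LipschitzWith K F)
    (hW : ∀ κ, IsForcedSolutionOn F (fun t => g t + pwl m κ t) (W κ) 0 1)
    (h0 : ∀ κ κ', W κ 0 = W κ' 0) {n : ℕ} (hn : n ≤ 2 ^ m) :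
    DependsOn (fun κ => W κ (n / 2 ^ m)) {i | (i : ℕ) < n} := fun κ κ' h =>
  ((hW κ).mono le_rfl (natCast_div_two_pow_le_one hn)).eqOn hF
    ((hW κ').mono le_rfl (natCast_div_two_pow_le_one hn)) (h0 κ κ')
    (fun t ht => congrArg (g t + ·) (dependsOn_pwl ht.2.le h))
    (right_mem_Icc.2 (by positivity))

theorem bijective_endpoints_forcedSolution (hF : LipschitzWith K F) {R : ℝ} (hR : ∀ x, |F x| ≤ R)
    (hW : ∀ κ, IsForcedSolutionOn F (fun t => g t + pwl m κ t) (W κ) 0 1)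
    (h0 : ∀ κ κ', W κ 0 = W κ' 0) :
    Function.Bijective fun κ (k : Fin (2 ^ m)) =>
      W κ (((k : ℕ) + 1) / 2 ^ m)
        + (g (((k : ℕ) + 1) / 2 ^ m) + pwl m κ (((k : ℕ) + 1) / 2 ^ m)) := by
  have hdep (k : Fin (2 ^ m)) : DependsOn (fun κ => W κ (((k : ℕ) + 1) / 2 ^ m)
      + (g (((k : ℕ) + 1) / 2 ^ m) + pwl m κ (((k : ℕ) + 1) / 2 ^ m))) (Iic k) := by
    intro κ κ' h
    have hlt : ∀ i ∈ {i : Fin (2 ^ m) | (i : ℕ) < k + 1}, κ i = κ' i := fun i hi =>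
      h i (Nat.lt_succ_iff.1 hi)
    have hWk := dependsOn_forcedSolution hF hW h0 k.2 hlt
    have hpwl := dependsOn_pwl (m := m) (n := k + 1) le_rfl hlt
    push_cast at hWk hpwl
    simp only [hWk, hpwl]
  have hbij (κ : Fin (2 ^ m) → ℝ) (k : Fin (2 ^ m)) := by
    have hinit (s s' : ℝ) :
        W (Function.update κ k s) ((k : ℕ) / 2 ^ m)
          = W (Function.update κ k s') ((k : ℕ) / 2 ^ m) :=
      dependsOn_forcedSolution hF hW h0 k.2.le fun i hi => by
        have hik : i ≠ k := (Fin.lt_def.2 hi).ne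
        rw [Function.update_of_ne hik, Function.update_of_ne hik]
    have hend : ((k : ℕ) + 1 : ℝ) / 2 ^ m ≤ 1 := by
      exact_mod_cast natCast_div_two_pow_le_one (m := m) (n := k + 1) k.2
    exact IsForcedSolutionOn.bijective_endpoint hF
      (fun s => (hW (Function.update κ k s)).mono (by positivity) hend)
      (div_lt_div_of_pos_right (lt_add_one _) (by positivity)) hinit
      (fun s s' t ht => by rw [add_sub_add_left_eq_sub, pwl_update_sub_pwl_update κ k s s' ht]) hR
  exact ⟨injective_of_triangular hdep fun κ k => (hbij κ k).1,
    surjective_of_triangular hdep fun κ k => (hbij κ k).2⟩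

end Shooting

section Flow

theorem measurable_integral_of_abs_le {f : ℝ → ℝ} {M : ℝ} (hM : ∀ x, |f x| ≤ M) (a : ℝ) :
    Measurable fun x => ∫ η in a..x, f η := by
  classical
  let S : Set ℝ := {x | IntervalIntegrable f volume a x}
  have hS : S.OrdConnected := by
    refine ordConnected_iff_uIcc_subset.2 fun x hx z hz y hy => ?_
    exact hx.trans ((hx.symm.trans hz).mono_set (uIcc_subset_uIcc_left hy))
  have hlip : LipschitzOnWith M.toNNReal (fun x => ∫ η in a..x, f η) S := by
    refine LipschitzOnWith.of_dist_le_mul fun x hx y hy => ?_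
    rw [Real.dist_eq, Real.dist_eq, Real.coe_toNNReal _ ((abs_nonneg _).trans (hM 0)),
      intervalIntegral.integral_interval_sub_left hx hy]
    exact intervalIntegral.norm_integral_le_of_norm_le_const (f := f) fun η _ => hM η
  have hpiecewise : (fun x => ∫ η in a..x, f η) = S.piecewise (fun x => ∫ η in a..x, f η) 0 := by
    funext x
    by_cases hx : x ∈ S
    · rw [piecewise_eq_of_mem _ _ _ hx]
    · rw [piecewise_eq_of_notMem _ _ _ hx, intervalIntegral.integral_undef hx, Pi.zero_apply]
  rw [hpiecewise]
  exact hlip.continuousOn.measurable_piecewise continuousOn_const hS.measurableSet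

-- An interval integral that does not exist is `0`, so integrability has to be derived first.
theorem continuous_of_eq_add_integral_comp {h u : ℝ → ℝ} {α M : ℝ} (hh : Continuous h)
    (hM : ∀ x, |h x| ≤ M) (hu : ∀ β, u β = α + ∫ η in (0 : ℝ)..β, h (u η)) : Continuous u := by
  have hmeas : Measurable u := by
    rw [funext hu]
    exact (measurable_integral_of_abs_le (fun η => hM (u η)) 0).const_add α
  have hint (x y : ℝ) : IntervalIntegrable (fun η => h (u η)) volume x y :=
    (intervalIntegrable_const (c := M)).mono_fun (hh.measurable.comp hmeas).aestronglyMeasurable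
      (Eventually.of_forall fun η => (hM (u η)).trans (le_abs_self M))
  rw [funext hu]
  exact continuous_const.add (intervalIntegral.continuous_primitive hint 0)

/-- The Lamperti transform `x ↦ ∫₀^x dη / σ(η)`, which conjugates the flow of `σ` to translation. -/
noncomputable def lamperti (σ : ℝ → ℝ) (x : ℝ) : ℝ := ∫ η in (0 : ℝ)..x, (σ η)⁻¹

/-- The drift `(b / σ) ∘ φ(0, ·)` of the Lamperti-transformed equation, the curve `φ(0, ·)` being
the inverse of `lamperti σ`. -/
noncomputable def lampertiDrift (b σ : ℝ → ℝ) (φ : ℝ → ℝ → ℝ) (z : ℝ) : ℝ := b (φ 0 z) / σ (φ 0 z)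

variable {b σ : ℝ → ℝ} {φ : ℝ → ℝ → ℝ} {M : ℝ}

theorem exists_bound_lampertiDrift (hb : ∃ M, ∀ x, |b x| ≤ M)
    (hσ : ∃ c, 0 < c ∧ ∀ x, c ≤ σ x) : ∃ R, ∀ z, |lampertiDrift b σ φ z| ≤ R := by
  obtain ⟨M, hM⟩ := hb
  obtain ⟨c, hc, hcσ⟩ := hσ
  refine ⟨M / c, fun z => ?_⟩
  rw [lampertiDrift, abs_div, abs_of_pos (hc.trans_le (hcσ _))]
  exact div_le_div₀ ((abs_nonneg _).trans (hM 0)) (hM _) hc (hcσ _)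

theorem lamperti_zero : lamperti σ 0 = 0 := intervalIntegral.integral_same

theorem hasDerivAt_lamperti (hσ : Continuous σ) (hpos : ∀ x, 0 < σ x) (x : ℝ) :
    HasDerivAt (lamperti σ) (σ x)⁻¹ x :=
  ((hσ.inv₀ fun x => (hpos x).ne').integral_hasStrictDerivAt 0 x).hasDerivAt

theorem continuous_lamperti (hσ : Continuous σ) (hpos : ∀ x, 0 < σ x) : Continuous (lamperti σ) :=
  continuous_iff_continuousAt.2 fun x => (hasDerivAt_lamperti hσ hpos x).continuousAt

theorem strictMono_lamperti (hσ : Continuous σ) (hpos : ∀ x, 0 < σ x) :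
    StrictMono (lamperti σ) := by
  refine strictMono_of_deriv_pos fun x => ?_
  rw [(hasDerivAt_lamperti hσ hpos x).deriv]
  exact inv_pos.2 (hpos x)

variable (hφ : ∀ α β : ℝ, φ α β = α + ∫ η in (0 : ℝ)..β, σ (φ α η))

include hφ

theorem flow_zero (α : ℝ) : φ α 0 = α := by
  rw [hφ, intervalIntegral.integral_same, add_zero]

variable (hM : ∀ x, |σ x| ≤ M)

include hM

theorem hasDerivAt_flow (hσ : Continuous σ) (α β : ℝ) : HasDerivAt (φ α) (σ (φ α β)) β := by
  have hc : Continuous (φ α) := continuous_of_eq_add_integral_comp hσ hM (hφ α)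
  have h := ((hσ.comp hc).integral_hasStrictDerivAt 0 β).hasDerivAt.const_add α
  exact h.congr_of_eventuallyEq (Eventually.of_forall (hφ α))

theorem lipschitzWith_flow (hσ : Continuous σ) (α : ℝ) : LipschitzWith M.toNNReal (φ α) := by
  refine lipschitzWith_of_nnnorm_deriv_le
    (fun β => (hasDerivAt_flow hφ hM hσ α β).differentiableAt) fun β => ?_
  rw [(hasDerivAt_flow hφ hM hσ α β).deriv]
  exact NNReal.le_toNNReal_of_coe_le (hM _)

theorem lamperti_flow (hσ : Continuous σ) (hpos : ∀ x, 0 < σ x) (α β : ℝ) :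
    lamperti σ (φ α β) = lamperti σ α + β := by
  have hd (β : ℝ) : HasDerivAt (fun β => lamperti σ (φ α β) - β) 0 β := by
    have h := ((hasDerivAt_lamperti hσ hpos (φ α β)).comp β (hasDerivAt_flow hφ hM hσ α β)).sub
      (hasDerivAt_id' β)
    rwa [inv_mul_cancel₀ (hpos _).ne', sub_self] at h
  have hconst := is_const_of_deriv_eq_zero (fun β => (hd β).differentiableAt)
    (fun β => (hd β).deriv) β 0
  simp only [flow_zero hφ, sub_zero] at hconst
  exact sub_eq_iff_eq_add.1 hconst

theorem flow_eq_flow_zero_lamperti_add (hσ : Continuous σ) (hpos : ∀ x, 0 < σ x) (α β : ℝ) :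
    φ α β = φ 0 (lamperti σ α + β) :=
  (strictMono_lamperti hσ hpos).injective <| by
    rw [lamperti_flow hφ hM hσ hpos, lamperti_flow hφ hM hσ hpos, lamperti_zero, zero_add]

theorem exp_neg_integral_deriv_flow (hσ : ContDiff ℝ 1 σ) (hpos : ∀ x, 0 < σ x) (x y : ℝ) :
    Real.exp (-∫ η in (0 : ℝ)..y, deriv σ (φ x η)) = σ x / σ (φ x y) := by
  have hc : Continuous (φ x) := (lipschitzWith_flow hφ hM hσ.continuous x).continuous
  have hlog (η : ℝ) : HasDerivAt (fun η => Real.log (σ (φ x η))) (deriv σ (φ x η)) η := by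
    have h := ((((hσ.differentiable one_ne_zero) (φ x η)).hasDerivAt).comp η
      (hasDerivAt_flow hφ hM hσ.continuous x η)).log (hpos _).ne'
    rwa [Function.comp_apply, mul_div_cancel_right₀ _ (hpos (φ x η)).ne'] at h
  rw [intervalIntegral.integral_eq_sub_of_hasDerivAt (fun η _ => hlog η)
    (((hσ.continuous_deriv le_rfl).comp hc).intervalIntegrable _ _), flow_zero hφ, neg_sub,
    Real.exp_sub, Real.exp_log (hpos _), Real.exp_log (hpos _)]

theorem fsb_eq_mul_lampertiDrift (hσ : ContDiff ℝ 1 σ) (hpos : ∀ x, 0 < σ x) (x y : ℝ) :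
    fsb b σ φ x y = σ x * lampertiDrift b σ φ (lamperti σ x + y) := by
  rw [fsb, exp_neg_integral_deriv_flow hφ hM hσ hpos, lampertiDrift,
    ← flow_eq_flow_zero_lamperti_add hφ hM hσ.continuous hpos]
  ring

theorem continuous_lampertiDrift (hb : Continuous b) (hσ : Continuous σ) (hpos : ∀ x, 0 < σ x) :
    Continuous (lampertiDrift b σ φ) := by
  have hc : Continuous (φ 0) := (lipschitzWith_flow hφ hM hσ 0).continuous
  exact (hb.comp hc).div (hσ.comp hc) fun z => (hpos _).ne'

theorem exists_lipschitzWith_lampertiDrift (hbLip : ∃ K, LipschitzWith K b)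
    (hσLip : ∃ K, LipschitzWith K σ) (hb : ∃ M, ∀ x, |b x| ≤ M)
    (hσpos : ∃ c, 0 < c ∧ ∀ x, c ≤ σ x) : ∃ K, LipschitzWith K (lampertiDrift b σ φ) := by
  obtain ⟨K, hK⟩ := exists_lipschitzWith_div hbLip hσLip hb hσpos
  exact ⟨_, hK.comp (lipschitzWith_flow hφ hM (hσLip.elim fun _ h => h.continuous) 0)⟩

theorem isForcedSolutionOn_lamperti (hb : Continuous b) (hσ : ContDiff ℝ 1 σ)
    (hpos : ∀ x, 0 < σ x) {ξ T : ℝ} {a y : ℝ → ℝ} (hy : ContinuousOn y (Icc 0 T))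
    (ha : ContinuousOn a (Icc 0 T))
    (hint : ∀ t ∈ Icc 0 T, a t = ξ + ∫ u in (0 : ℝ)..t, fsb b σ φ (a u) (y u)) :
    IsForcedSolutionOn (lampertiDrift b σ φ) y (fun t => lamperti σ (a t)) 0 T := by
  have hΛ : ContinuousOn (fun t => lamperti σ (a t)) (Icc 0 T) :=
    (continuous_lamperti hσ.continuous hpos).comp_continuousOn ha
  have hf : ContinuousOn (fun u => fsb b σ φ (a u) (y u)) (Icc 0 T) := by
    simp only [fsb_eq_mul_lampertiDrift hφ hM hσ hpos]
    exact (hσ.continuous.comp_continuousOn ha).mul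
      ((continuous_lampertiDrift hφ hM hb hσ.continuous hpos).comp_continuousOn (hΛ.add hy))
  refine ⟨hΛ, fun t ht => ?_⟩
  have ht' : t ∈ Icc 0 T := Ico_subset_Icc_self ht
  have hnhds : Icc 0 T ∈ 𝓝[≥] t :=
    mem_of_superset (Icc_mem_nhdsGE ht.2) (Icc_subset_Icc_left ht.1)
  have hnhds' : Icc 0 T ∈ 𝓝[>] t := nhdsWithin_mono _ Ioi_subset_Ici_self hnhds
  have hprimitive : HasDerivWithinAt (fun v => ∫ u in (0 : ℝ)..v, fsb b σ φ (a u) (y u))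
      (fsb b σ φ (a t) (y t)) (Ici t) t :=
    intervalIntegral.integral_hasDerivWithinAt_right
      ((hf.mono (Icc_subset_Icc_right ht'.2)).intervalIntegrable_of_Icc ht.1)
      ⟨Icc 0 T, hnhds', hf.aestronglyMeasurable measurableSet_Icc⟩
      ((hf t ht').mono_of_mem_nhdsWithin hnhds')
  have hda : HasDerivWithinAt a (fsb b σ φ (a t) (y t)) (Ici t) t :=
    (hprimitive.const_add ξ).congr_of_eventuallyEq (mem_of_superset hnhds hint) (hint t ht')
  have h := (hasDerivAt_lamperti hσ.continuous hpos (a t)).comp_hasDerivWithinAt t hda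
  rwa [fsb_eq_mul_lampertiDrift hφ hM hσ hpos, inv_mul_cancel_left₀ (hpos _).ne'] at h

end Flow

theorem stmt15_general
    (b σ : ℝ → ℝ) (hb : ∃ M : ℝ, ∀ x : ℝ, |b x| ≤ M) (hbLip : ∃ K, LipschitzWith K b)
    (hσ : ContDiff ℝ 1 σ) (hσM : ∃ M : ℝ, ∀ x : ℝ, |σ x| ≤ M) (hσLip : ∃ K, LipschitzWith K σ)
    (hσpos : ∃ c : ℝ, 0 < c ∧ ∀ x : ℝ, c ≤ σ x)
    (φ : ℝ → ℝ → ℝ) (hφ : ∀ α β : ℝ, φ α β = α + ∫ η in (0 : ℝ)..β, σ (φ α η))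
    (A : ℝ → (ℝ → ℝ) → ℝ → ℝ)
    (hA : ∀ (ξ : ℝ) (g : ℝ → ℝ), ContinuousOn g (Icc 0 1) → g 0 = 0 →
      ContinuousOn (A ξ g) (Icc 0 1) ∧
      ∀ t ∈ Icc (0 : ℝ) 1, A ξ g t = ξ + ∫ u in (0 : ℝ)..t, fsb b σ φ (A ξ g u) (g u))
    (m : ℕ) (ξ : ℝ) (g : ℝ → ℝ) (hg : ContinuousOn g (Icc 0 1)) (hg0 : g 0 = 0)
    (ξs : Fin (2 ^ m) → ℝ) :
    ∃! κ : Fin (2 ^ m) → ℝ, ∀ k : Fin (2 ^ m),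
      φ (A ξ (fun u => g u + pwl m κ u) (((k : ℕ) + 1) / 2 ^ m))
          (g (((k : ℕ) + 1) / 2 ^ m) + pwl m κ (((k : ℕ) + 1) / 2 ^ m)) = ξs k := by
  obtain ⟨M, hM⟩ := hσM
  obtain ⟨R, hR⟩ := exists_bound_lampertiDrift (φ := φ) hb hσpos
  obtain ⟨K, hF⟩ := exists_lipschitzWith_lampertiDrift hφ hM hbLip hσLip hb hσpos
  have hbc : Continuous b := hbLip.elim fun _ h => h.continuous
  have hpos : ∀ x, 0 < σ x := fun x => hσpos.elim fun c hc => hc.1.trans_le (hc.2 x)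
  have hy (κ : Fin (2 ^ m) → ℝ) : ContinuousOn (fun u => g u + pwl m κ u) (Icc 0 1) :=
    hg.add (continuous_pwl κ).continuousOn
  have hAκ (κ : Fin (2 ^ m) → ℝ) := hA ξ _ (hy κ) (by rw [hg0, pwl_zero, add_zero])
  have hA0 (κ : Fin (2 ^ m) → ℝ) : A ξ (fun u => g u + pwl m κ u) 0 = ξ := by
    simpa using (hAκ κ).2 0 (left_mem_Icc.2 zero_le_one)
  have hbij := bijective_endpoints_forcedSolution hF hR
    (fun κ => isForcedSolutionOn_lamperti hφ hM hbc hσ hpos (hy κ)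
      (hAκ κ).1 (hAκ κ).2) fun κ κ' => by rw [hA0 κ, hA0 κ']
  simpa only [← lamperti_flow hφ hM hσ.continuous hpos, funext_iff,
    (strictMono_lamperti hσ.continuous hpos).injective.eq_iff]
    using hbij.existsUnique fun k => lamperti σ (ξs k)

theorem stmt15
    (lam : ℝ) (hlam1 : 1/3 < lam) (hlam2 : lam < 1)
    (b σ : ℝ → ℝ) (hb : CbInf b) (hσ : CbInf σ)
    (hσpos : ∃ c : ℝ, 0 < c ∧ ∀ x : ℝ, c ≤ σ x)
    (φ : ℝ → ℝ → ℝ) (hφ : ∀ α β : ℝ, φ α β = α + ∫ η in (0:ℝ)..β, σ (φ α η))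
    -- `A ξ g` is the Doss–Sussmann auxiliary path for initial value `ξ` and driver `g`,
    -- so that `x_t(ξ,g) = φ(A ξ g t, g t)`
    (A : ℝ → (ℝ → ℝ) → ℝ → ℝ)
    (hA : ∀ (ξ : ℝ) (g : ℝ → ℝ), ContinuousOn g (Set.Icc 0 1) → g 0 = 0 →
      ContinuousOn (A ξ g) (Set.Icc 0 1) ∧
      ∀ t ∈ Set.Icc (0:ℝ) 1, A ξ g t = ξ + ∫ u in (0:ℝ)..t, fsb b σ φ (A ξ g u) (g u))
    (m : ℕ) (ξ : ℝ)
    (g : ℝ → ℝ)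
    (hg : ∃ Cg : ℝ, ∀ s ∈ Set.Icc (0:ℝ) 1, ∀ t ∈ Set.Icc (0:ℝ) 1,
      |g t - g s| ≤ Cg * |t - s| ^ lam)
    (hg0 : g 0 = 0)
    (ξs : Fin (2 ^ m) → ℝ) :
    ∃! κ : Fin (2 ^ m) → ℝ, ∀ k : Fin (2 ^ m),
      φ (A ξ (fun u => g u + pwl m κ u) ((((k : ℕ) : ℝ) + 1) / (2:ℝ) ^ m))
          (g ((((k : ℕ) : ℝ) + 1) / (2:ℝ) ^ m)
            + pwl m κ ((((k : ℕ) : ℝ) + 1) / (2:ℝ) ^ m))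
        = ξs k := by
  obtain ⟨_, hHolder⟩ := hg
  exact stmt15_general b σ hb.exists_bound hb.exists_lipschitzWith hσ.contDiff_one hσ.exists_bound
    hσ.exists_lipschitzWith hσpos φ hφ A hA m ξ g
    (continuousOn_of_dist_le_mul_rpow (by linarith) hHolder) hg0 ξs
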